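/- arXiv:2410.19504 — 3 statements merged into one kernel-verified Lean document; each statement's English description precedes it below -/
import Mathlib

section
/- Let ν > 0. For all points y, z of an n-dimensional real Euclidean space, the norm of the gradient with respect to y of the map y ↦ (1 + ‖y − z‖²/ν)^{-(ν+1)/2} is at most (ν+1)/√ν. In particular, the Student-t similarity kernel has uniformly bounded (Lipschitz-bounded) gradients over all of the space. -/
/-! With `r = ‖y - z‖` and `b = 1 + r² / ν ≥ 1`, the gradient is
`-((ν + 1) / ν) * b ^ (-(ν + 1) / 2 - 1) • (y - z)` (`hasGradientAt_studentT`). Its exponent is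
at most `-1`, so its norm is at most `((ν + 1) / ν) * (r / b)`, and AM-GM gives `r ≤ √ν * b`. -/

theorem hasGradientAt_studentT (n : ℕ) (ν : ℝ) (hν : 0 < ν) (y z : EuclideanSpace ℝ (Fin n)) :
    HasGradientAt (fun y : EuclideanSpace ℝ (Fin n) =>
        (1 + ‖y - z‖ ^ 2 / ν) ^ (-(ν + 1) / 2))
      ((-((ν + 1) / ν) * (1 + ‖y - z‖ ^ 2 / ν) ^ (-(ν + 1) / 2 - 1)) • (y - z)) y := by
  have hb : 1 + ‖y - z‖ ^ 2 / ν ≠ 0 := by positivity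
  rw [hasGradientAt_iff_hasFDerivAt]
  have h1 := ((((hasFDerivAt_id (𝕜 := ℝ) y).sub_const z).norm_sq.mul_const ν⁻¹).const_add
    1).rpow_const (p := -(ν + 1) / 2) (Or.inl (by simpa [div_eq_mul_inv] using hb))
  simp only [id, ← div_eq_mul_inv] at h1
  refine h1.congr_fderiv ?_
  ext w
  simp
  field_simp
  ring

/-- **Uniformly bounded gradients of the Student-t similarity kernel.**
For `ν > 0` and all points `y, z` of an `n`-dimensional real Euclidean space, the norm of the
gradient (with respect to `y`) of `y ↦ (1 + ‖y − z‖²/ν) ^ (-(ν+1)/2)` is at most `(ν+1)/√ν`. -/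
theorem studentT_kernel_gradient_bound (n : ℕ) (ν : ℝ) (hν : 0 < ν)
    (y z : EuclideanSpace ℝ (Fin n)) :
    ‖gradient (fun y : EuclideanSpace ℝ (Fin n) =>
        (1 + ‖y - z‖ ^ 2 / ν) ^ (-(ν + 1) / 2)) y‖
      ≤ (ν + 1) / Real.sqrt ν := by
  rw [(hasGradientAt_studentT n ν hν y z).gradient, norm_smul, norm_mul, norm_neg]
  set r := ‖y - z‖ with hr
  have hr0 : 0 ≤ r := norm_nonneg _
  have hb1 : 1 ≤ 1 + r ^ 2 / ν := le_add_of_nonneg_right (by positivity)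
  have hb0 : 0 < 1 + r ^ 2 / ν := by positivity
  rw [Real.norm_of_nonneg (by positivity), Real.norm_of_nonneg (by positivity)]
  have hpow : (1 + r ^ 2 / ν) ^ (-(ν + 1) / 2 - 1) ≤ (1 + r ^ 2 / ν)⁻¹ := by
    rw [← Real.rpow_neg_one]
    exact Real.rpow_le_rpow_of_exponent_le hb1 (by linarith)
  have hs : 0 < √ν := Real.sqrt_pos.2 hν
  have hsq : √ν ^ 2 = ν := Real.sq_sqrt hν.le
  have hrb : (1 + r ^ 2 / ν)⁻¹ * r ≤ √ν := by
    rw [inv_mul_le_iff₀ hb0]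
    have h : (1 + r ^ 2 / ν) * √ν = (√ν ^ 2 + r ^ 2) / √ν := by
      rw [← hsq]
      simp only [Real.sqrt_sq hs.le]
      field_simp
    rw [h, le_div_iff₀ hs]
    nlinarith [sq_nonneg (√ν - r), mul_nonneg hr0 hs.le]
  calc (ν + 1) / ν * (1 + r ^ 2 / ν) ^ (-(ν + 1) / 2 - 1) * r
      ≤ (ν + 1) / ν * (1 + r ^ 2 / ν)⁻¹ * r := by gcongr
    _ = (ν + 1) / ν * ((1 + r ^ 2 / ν)⁻¹ * r) := by ring
    _ ≤ (ν + 1) / ν * √ν := by gcongr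
    _ = (ν + 1) / √ν := by
      rw [div_mul_eq_mul_div, mul_div_assoc, Real.sqrt_div_self, ← div_eq_mul_inv]
end

section
/- (Lipschitz-bounded gradient of the SMM loss.) Fix ν > 0, r_max ≥ 0 and a batch size B ≥ 2. There exists a constant C = C(ν, r_max, B) < ∞ with the following property: for every configuration y₁,…,y_B of points in an n-dimensional real Euclidean space such that for every index i there exists j ≠ i with ‖y_i − y_j‖ ≤ r_max, the loss L_SMM(y₁,…,y_B) = Σ_{i=1}^{B} log( Σ_{j=1}^{B} S_ν(y_i, y_j) ) satisfies ‖∇_{y_i} L_SMM‖ ≤ C for every i ∈ {1,…,B}. -/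
/-!
The bound comes from a Lipschitz estimate, valid for every configuration. With `s = ‖x‖ / √ν`, the
elementary inequality `1 + (s + e)² ≤ (1 + s²)(1 + e)² ≤ (1 + s²) exp (2e)` shows that the kernel
changes by a factor of at most `exp (K d)`, `K = (ν + 1) / √ν`, when its argument moves by `d`
(`studentKernel_le_exp_mul`). Such a multiplicative bound passes to sums of kernels, so each
`log (∑ j, S_ν(y_i', y_j))` is `K`-Lipschitz in the point `y_i`, and the loss is `B * K`-Lipschitz.
The norm of the gradient of a Lipschitz function is at most its Lipschitz constant.
-/

/-- The profile `1 + a² / ν` is multiplicatively Lipschitz: a step of size `d` changes it by a factor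
of at most `exp (2 d / √ν)`. -/
lemma one_add_sq_div_le_exp_mul {ν a b d : ℝ} (hν : 0 < ν) (ha : 0 ≤ a) (hd : 0 ≤ d)
    (hab : a ≤ b + d) :
    1 + a ^ 2 / ν ≤ Real.exp (2 * (d / √ν)) * (1 + b ^ 2 / ν) := by
  have hsq : 0 < √ν := Real.sqrt_pos.2 hν
  have hdiv : ∀ t : ℝ, t ^ 2 / ν = (t / √ν) ^ 2 := fun t => by
    rw [div_pow, Real.sq_sqrt hν.le]
  rw [hdiv a, hdiv b]
  have hs : a / √ν ≤ b / √ν + d / √ν := by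
    rw [← add_div]; gcongr
  have ha' : 0 ≤ a / √ν := by positivity
  have he : 0 ≤ d / √ν := by positivity
  generalize a / √ν = p at *
  generalize b / √ν = s at *
  generalize d / √ν = e at *
  have hexp : (1 + e) ^ 2 ≤ Real.exp (2 * e) := by
    have h : 1 + e ≤ Real.exp e := by linarith [Real.add_one_le_exp e]
    calc (1 + e) ^ 2 ≤ Real.exp e ^ 2 := by gcongr
      _ = Real.exp (2 * e) := by rw [← Real.exp_nat_mul]; norm_num
  calc 1 + p ^ 2 ≤ 1 + (s + e) ^ 2 := by gcongr
    _ ≤ (1 + e) ^ 2 * (1 + s ^ 2) := by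
      nlinarith [mul_nonneg he (sq_nonneg (s - 1)), mul_nonneg he (sq_nonneg s),
        sq_nonneg (e * s)]
    _ ≤ Real.exp (2 * e) * (1 + s ^ 2) := by gcongr

lemma studentKernel_le_exp_mul {E : Type*} [SeminormedAddCommGroup E] {ν d : ℝ} (hν : 0 < ν)
    {x x' : E} (hd : ‖x' - x‖ ≤ d) :
    (1 + ‖x‖ ^ 2 / ν) ^ (-(ν + 1) / 2)
      ≤ Real.exp ((ν + 1) / √ν * d) * (1 + ‖x'‖ ^ 2 / ν) ^ (-(ν + 1) / 2) := by
  have hd0 : 0 ≤ d := (norm_nonneg _).trans hd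
  have hx' : ‖x'‖ ≤ ‖x‖ + d := by
    linarith [norm_sub_norm_le x' x]
  have h := one_add_sq_div_le_exp_mul hν (norm_nonneg x') hd0 hx'
  -- The exponent is negative, so raising to it reverses the inequality `h`.
  have h2 := Real.rpow_le_rpow_of_nonpos (z := -(ν + 1) / 2) (by positivity) h (by linarith)
  rw [Real.mul_rpow (Real.exp_pos _).le (by positivity), ← Real.exp_mul] at h2
  calc (1 + ‖x‖ ^ 2 / ν) ^ (-(ν + 1) / 2)
      = Real.exp ((ν + 1) / √ν * d) * (Real.exp (2 * (d / √ν) * (-(ν + 1) / 2))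
          * (1 + ‖x‖ ^ 2 / ν) ^ (-(ν + 1) / 2)) := by
        rw [← mul_assoc, ← Real.exp_add]
        have : (ν + 1) / √ν * d + 2 * (d / √ν) * (-(ν + 1) / 2) = 0 := by ring
        rw [this, Real.exp_zero, one_mul]
    _ ≤ _ := by gcongr

/-- Moving one point by `‖v - w‖` moves each pairwise difference by at most that much: the two
endpoints of a pair either do not move, or exactly one moves, or both coincide. -/
lemma norm_update_sub_update_sub_le {ι E : Type*} [DecidableEq ι] [SeminormedAddCommGroup E]
    (y : ι → E) (i k j : ι) (v w : E) :
    ‖(Function.update y i w k - Function.update y i w j)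
      - (Function.update y i v k - Function.update y i v j)‖ ≤ ‖v - w‖ := by
  by_cases hk : k = i <;> by_cases hj : j = i
  · subst hk; subst hj; simp
  · subst hk; simp [hj, norm_sub_rev]
  · subst hj; simp [hk]
  · simp [hk, hj]

/-- **Lipschitz-bounded gradient of the SMM loss.**
Fix `ν > 0`, `r_max ≥ 0` and a batch size `B ≥ 2`. There is a constant `C = C(ν, r_max, B)`
such that for every configuration `y₁,…,y_B` in which every index `i` has some `j ≠ i` with
`‖y_i − y_j‖ ≤ r_max`, the loss
`L_SMM(y₁,…,y_B) = Σ_i log (Σ_j S_ν(y_i, y_j))`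
has `‖∇_{y_i} L_SMM‖ ≤ C` for every `i` (gradient in the `i`-th point, others held fixed). -/
theorem smm_loss_gradient_bounded (n B : ℕ) (hB : 2 ≤ B) (ν rmax : ℝ)
    (hν : 0 < ν) (hr : 0 ≤ rmax) :
    ∃ C : ℝ, ∀ y : Fin B → EuclideanSpace ℝ (Fin n),
      (∀ i, ∃ j, j ≠ i ∧ ‖y i - y j‖ ≤ rmax) →
      ∀ i : Fin B,
        ‖gradient
            (fun v : EuclideanSpace ℝ (Fin n) => ∑ i' : Fin B,
              Real.log (∑ j : Fin B,
                (1 + ‖Function.update y i v i' - Function.update y i v j‖ ^ 2 / ν)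
                  ^ (-(ν + 1) / 2))) (y i)‖ ≤ C := by
  set K : ℝ := (ν + 1) / √ν with hK
  have hK0 : 0 ≤ K := by positivity
  refine ⟨B * K, fun y _ i => ?_⟩
  have key : ∀ v w : EuclideanSpace ℝ (Fin n), ∀ k : Fin B,
      Real.log (∑ j : Fin B, (1 + ‖Function.update y i v k - Function.update y i v j‖ ^ 2 / ν)
          ^ (-(ν + 1) / 2))
        ≤ Real.log (∑ j : Fin B, (1 + ‖Function.update y i w k - Function.update y i w j‖ ^ 2 / ν)
          ^ (-(ν + 1) / 2)) + K * ‖v - w‖ := by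
    intro v w k
    have hpos : ∀ u : EuclideanSpace ℝ (Fin n), 0 < ∑ j : Fin B,
        (1 + ‖Function.update y i u k - Function.update y i u j‖ ^ 2 / ν) ^ (-(ν + 1) / 2) :=
      fun u => Finset.sum_pos (fun j _ => by positivity) ⟨k, Finset.mem_univ k⟩
    rw [add_comm (Real.log _), ← Real.log_exp (K * ‖v - w‖),
      ← Real.log_mul (Real.exp_pos _).ne' (hpos w).ne']
    refine Real.log_le_log (hpos v) ?_
    rw [Finset.mul_sum]
    exact Finset.sum_le_sum fun j _ =>
      studentKernel_le_exp_mul hν (norm_update_sub_update_sub_le y i k j v w)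
  have hlip : LipschitzWith (Real.toNNReal (B * K))
      (fun v : EuclideanSpace ℝ (Fin n) => ∑ i' : Fin B,
        Real.log (∑ j : Fin B,
          (1 + ‖Function.update y i v i' - Function.update y i v j‖ ^ 2 / ν)
            ^ (-(ν + 1) / 2))) := by
    refine LipschitzWith.of_le_add_mul' _ fun v w => ?_
    refine (Finset.sum_le_sum fun k _ => key v w k).trans_eq ?_
    rw [Finset.sum_add_distrib, Finset.sum_const, Finset.card_univ, Fintype.card_fin,
      nsmul_eq_mul, dist_eq_norm, mul_assoc]
  rw [gradient, LinearIsometryEquiv.norm_map]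
  refine (norm_fderiv_le_of_lipschitz ℝ hlip).trans_eq ?_
  exact Real.coe_toNNReal _ (by positivity)
end

section
/- (t-SNE gradient formula.) Let y₁,…,y_N be points in an n-dimensional real Euclidean space, and let (P_{ij})_{i≠j} be nonnegative reals with P_{ij} = P_{ji}, Σ_{i≠j} P_{ij} = 1, and P_{ij} > 0 only when the corresponding Q_{ij} is defined. Set w_{ij} = (1 + ‖y_i − y_j‖²)^{-1} for i ≠ j, Z = Σ_{k≠l} w_{kl}, and Q_{ij} = w_{ij}/Z. Then the gradient of the t-SNE loss L(y₁,…,y_N) = Σ_{i≠j} P_{ij} log(P_{ij}/Q_{ij}) with respect to y_i equals 4 Σ_{j≠i} (P_{ij} − Q_{ij}) · (y_i − y_j) / (1 + ‖y_i − y_j‖²). -/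
/-!
Since `∑_{a≠b} P_{ab} = 1`, the loss is, up to an additive constant,
`∑_{a≠b} P_{ab} log (1 + ‖y_a - y_b‖²) + log Z` (`tsne_loss_eq`). Both the first sum and `Z` are
weighted sums over pairs of a function of the squared distance, and `hasGradientAt_pairSum` computes
the gradient in `y_i` of any such sum with symmetric weights: the pairs `(i, j)` and `(j, i)`
contribute equally, which together with the factor `2` of `∇‖x‖² = 2x` produces the factor `4`.
-/

/-- The low-dimensional t-SNE similarity weight `w_{ab} = (1 + ‖y_a − y_b‖²)⁻¹`. -/
noncomputable def tsneW {n N : ℕ} (y : Fin N → EuclideanSpace ℝ (Fin n))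
    (a b : Fin N) : ℝ :=
  (1 + ‖y a - y b‖ ^ 2)⁻¹

/-- The t-SNE normalizer `Z = Σ_{k≠l} w_{kl}`. -/
noncomputable def tsneZ {n N : ℕ} (y : Fin N → EuclideanSpace ℝ (Fin n)) : ℝ :=
  ∑ k, ∑ l, if k = l then 0 else tsneW y k l

/-- The gradient in the `i`-th point of a pair energy `∑_{a≠b} c_{ab} φ(‖y_a - y_b‖²)` with
symmetric weights; `φ'` need only be the derivative of `φ` at nonnegative arguments. -/
theorem hasGradientAt_pairSum {n N : ℕ} (y : Fin N → EuclideanSpace ℝ (Fin n))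
    (c : Fin N → Fin N → ℝ) (hc : ∀ a b, c a b = c b a) (φ φ' : ℝ → ℝ)
    (hφ : ∀ t, 0 ≤ t → HasDerivAt φ (φ' t) t) (i : Fin N) :
    HasGradientAt
      (fun v : EuclideanSpace ℝ (Fin n) => ∑ a, ∑ b, if a = b then 0 else
        c a b * φ (‖Function.update y i v a - Function.update y i v b‖ ^ 2))
      (∑ j, if j = i then 0 else (4 * (c i j * φ' (‖y i - y j‖ ^ 2))) • (y i - y j))
      (y i) := by
  have hu : ∀ a, HasFDerivAt (fun v : EuclideanSpace ℝ (Fin n) => Function.update y i v a)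
      ((if a = i then (1 : ℝ) else 0) • ContinuousLinearMap.id ℝ (EuclideanSpace ℝ (Fin n)))
      (y i) := by
    intro a
    by_cases h : a = i
    · subst h
      simp only [Function.update_self, if_true]
      rw [one_smul]
      exact hasFDerivAt_id (y a)
    · simp only [Function.update_of_ne h, h, if_false]
      refine (hasFDerivAt_const (y a) (y i)).congr_fderiv ?_
      ext1 v
      exact (zero_smul ℝ v).symm
  have hterm : ∀ a b, HasFDerivAt
      (fun v : EuclideanSpace ℝ (Fin n) => if a = b then 0 else
        c a b * φ (‖Function.update y i v a - Function.update y i v b‖ ^ 2))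
      (innerSL ℝ ((2 * c a b * φ' (‖y a - y b‖ ^ 2) *
        ((if a = i then (1 : ℝ) else 0) - (if b = i then 1 else 0))) • (y a - y b))) (y i) := by
    intro a b
    by_cases h : a = b
    · subst h
      simpa using hasFDerivAt_const (𝕜 := ℝ) (0 : ℝ) (y i)
    · simp only [h, if_false]
      have h1 := ((hu a).sub (hu b)).norm_sq
      have h2 := hφ (‖y a - y b‖ ^ 2) (by positivity)
      have h3 := (HasDerivAt.comp_hasFDerivAt_of_eq (y i) h2 h1 (by simp)).const_mul (c a b)
      refine h3.congr_fderiv ?_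
      ext v
      simp only [smul_apply, ContinuousLinearMap.comp_apply, ContinuousLinearMap.id_apply, innerSL_apply_apply,
        Pi.sub_apply, Function.update_eq_self, ← sub_smul, inner_smul_right,
        real_inner_smul_left, smul_eq_mul, nsmul_eq_mul, Nat.cast_ofNat]
      ring
  have hsum := HasFDerivAt.fun_sum (u := Finset.univ) fun a _ =>
    HasFDerivAt.fun_sum (u := Finset.univ) fun b _ => hterm a b
  rw [hasGradientAt_iff_hasFDerivAt]
  refine hsum.congr_fderiv ?_
  simp only [← map_sum]
  change innerSL ℝ _ = innerSL ℝ _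
  congr 1
  -- Split the bracket `δ_{ai} - δ_{bi}` into two double sums, each collapsing to a single one.
  simp only [mul_sub, sub_smul, Finset.sum_sub_distrib, mul_ite, mul_one, mul_zero, ite_smul,
    zero_smul, Finset.sum_ite_eq', Finset.mem_univ, if_true]
  rw [Finset.sum_comm]
  simp only [Finset.sum_ite_eq', Finset.mem_univ, if_true]
  rw [← Finset.sum_sub_distrib]
  refine Finset.sum_congr rfl fun j _ => ?_
  by_cases h : j = i
  · simp [h]
  · rw [if_neg h, hc j i, norm_sub_rev (y j) (y i)]
    module

theorem tsneW_pos {n N : ℕ} (y : Fin N → EuclideanSpace ℝ (Fin n)) (a b : Fin N) :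
    0 < tsneW y a b := by
  unfold tsneW
  positivity

theorem tsneZ_pos {n N : ℕ} (hN : 2 ≤ N) (y : Fin N → EuclideanSpace ℝ (Fin n)) :
    0 < tsneZ y := by
  have h0 : ∀ a b, 0 ≤ if a = b then 0 else tsneW y a b := fun a b => by
    split_ifs
    exacts [le_rfl, (tsneW_pos y a b).le]
  refine Finset.sum_pos' (fun a _ => Finset.sum_nonneg fun b _ => h0 a b)
    ⟨⟨0, by omega⟩, Finset.mem_univ _, Finset.sum_pos' (fun b _ => h0 _ b)
      ⟨⟨1, by omega⟩, Finset.mem_univ _, ?_⟩⟩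
  simpa using tsneW_pos y _ _

/-- The loss splits into a constant, an attractive pair energy and `log Z`. -/
theorem tsne_loss_eq {n N : ℕ} (hN : 2 ≤ N) (y : Fin N → EuclideanSpace ℝ (Fin n))
    (P : Fin N → Fin N → ℝ) (hsum : (∑ a, ∑ b, if a = b then 0 else P a b) = 1) :
    (∑ a, ∑ b, if a = b then 0 else P a b * Real.log (P a b / (tsneW y a b / tsneZ y))) =
      (∑ a, ∑ b, if a = b then 0 else P a b * Real.log (P a b)) +
      ((∑ a, ∑ b, if a = b then 0 else P a b * Real.log (1 + ‖y a - y b‖ ^ 2)) +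
        Real.log (tsneZ y)) := by
  have hZ : Real.log (tsneZ y) =
      ∑ a, ∑ b, (if a = b then 0 else P a b) * Real.log (tsneZ y) := by
    simp only [← Finset.sum_mul, hsum, one_mul]
  rw [hZ]
  simp only [← Finset.sum_add_distrib]
  refine Finset.sum_congr rfl fun a _ => Finset.sum_congr rfl fun b _ => ?_
  by_cases h : a = b
  · simp [h]
  · simp only [h, if_false]
    by_cases hP : P a b = 0
    · simp [hP]
    · have hw := (tsneW_pos y a b).ne'
      have hz := (tsneZ_pos hN y).ne'
      rw [Real.log_div hP (div_ne_zero hw hz), Real.log_div hw hz, tsneW, Real.log_inv]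
      ring

/-- **t-SNE gradient formula.**
Let `y₁,…,y_N` be points (not all equal, `N ≥ 2`) and `(P_{ab})_{a≠b}` a symmetric nonnegative
matrix with `Σ_{a≠b} P_{ab} = 1`. With `w_{ab} = (1 + ‖y_a − y_b‖²)⁻¹`, `Z = Σ_{k≠l} w_{kl}`
and `Q_{ab} = w_{ab}/Z`, the gradient of the t-SNE loss
`L = Σ_{a≠b} P_{ab} log (P_{ab}/Q_{ab})` with respect to `y_i` is
`4 Σ_{j≠i} (P_{ij} − Q_{ij})·(y_i − y_j)/(1 + ‖y_i − y_j‖²)`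
(terms with `P_{ab} = 0` contribute `0` to the loss). -/
theorem tsne_gradient_formula (n N : ℕ) (hN : 2 ≤ N)
    (y : Fin N → EuclideanSpace ℝ (Fin n)) (P : Fin N → Fin N → ℝ)
    (hsymm : ∀ a b, P a b = P b a) (hnn : ∀ a b, 0 ≤ P a b)
    (hsum : (∑ a, ∑ b, if a = b then 0 else P a b) = 1)
    (hne : ∃ k l, y k ≠ y l) (i : Fin N) :
    HasGradientAt
      (fun v : EuclideanSpace ℝ (Fin n) => ∑ a, ∑ b, if a = b then 0 else
        P a b * Real.log (P a b /
          (tsneW (Function.update y i v) a b / tsneZ (Function.update y i v))))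
      (∑ j, if j = i then 0 else
        (4 * (P i j - tsneW y i j / tsneZ y)) •
          ((1 + ‖y i - y j‖ ^ 2)⁻¹ • (y i - y j)))
      (y i) := by
  have hlog := hasGradientAt_pairSum y P hsymm (fun t => Real.log (1 + t)) (fun t => (1 + t)⁻¹)
    (fun t ht => by
      simpa using ((hasDerivAt_id t).const_add 1).log (by simp; positivity)) i
  have hZ := hasGradientAt_pairSum y (fun _ _ => 1) (fun _ _ => rfl) (fun t => (1 + t)⁻¹)
    (fun t => -((1 + t) ^ 2)⁻¹)
    (fun t ht => by
      have h := ((hasDerivAt_id t).const_add 1).inv (by simp; positivity)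
      simpa [neg_div, Pi.inv_def] using h) i
  simp only [one_mul] at hZ
  change HasGradientAt (fun v => tsneZ (Function.update y i v)) _ _ at hZ
  have hZpos := (tsneZ_pos hN y).ne'
  rw [hasGradientAt_iff_hasFDerivAt] at hlog hZ ⊢
  simp only [tsne_loss_eq hN _ P hsum]
  have hlogZ := hZ.log (by simpa using hZpos)
  refine ((hlog.add hlogZ).const_add _).congr_fderiv ?_
  rw [Function.update_eq_self, ← map_smul, ← map_add]
  congr 1
  rw [Finset.smul_sum, ← Finset.sum_add_distrib]
  refine Finset.sum_congr rfl fun j _ => ?_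
  by_cases h : j = i
  · simp [h]
  · simp only [h, if_false, tsneW]
    rw [smul_smul, smul_smul, ← add_smul, ← inv_pow]
    congr 1
    ring
end
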